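/- arXiv:2308.07030 — 2 statements merged into one kernel-verified Lean document; each statement's English description precedes it below -/
import Mathlib

section
/- For every even natural number N ≥ 2, the angle θ*_N lies in the set 𝒢, where θ*_N = 2π·t_N/(N+1) with t_N = N/4 + 1/2 if N ≡ 2 (mod 8), t_N = N/4 if N ≡ 4 (mod 8), t_N = 3N/4 + 1/2 if N ≡ 6 (mod 8), and t_N = 3N/4 + 1 if N ≡ 0 (mod 8). -/
open Real

/-- The set `𝒢 = (π/4, π/2) ∪ (π/2, 3π/4) ∪ (5π/4, 3π/2) ∪ (3π/2, 7π/4)`. -/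
noncomputable def Gset : Set ℝ :=
  Set.Ioo (π / 4) (π / 2) ∪ Set.Ioo (π / 2) (3 * π / 4)
    ∪ Set.Ioo (5 * π / 4) (3 * π / 2) ∪ Set.Ioo (3 * π / 2) (7 * π / 4)

/-- The value `t_N` defined, for even `N`, according to `N mod 8`. -/
noncomputable def tval (N : ℕ) : ℝ :=
  if N % 8 = 2 then (N : ℝ) / 4 + 1 / 2
  else if N % 8 = 4 then (N : ℝ) / 4
  else if N % 8 = 6 then 3 * (N : ℝ) / 4 + 1 / 2
  else 3 * (N : ℝ) / 4 + 1

/-- The angle `θ*_N = 2π t_N/(N+1)`. -/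
noncomputable def thetaStar (N : ℕ) : ℝ := 2 * π * tval N / ((N : ℝ) + 1)

/-!
With `δ = π / (2 * (N + 1))`, the four branches of `t_N` give `θ*_N = π / 2 ± δ` or
`θ*_N = 3 * π / 2 ± δ`. The set `𝒢` consists of the punctured `π / 4`-neighbourhoods of
`π / 2` and `3 * π / 2`, and `0 < δ < π / 4` as soon as `N > 1`.
-/

theorem mem_Ioo_sub_union_Ioo_add_iff {α : Type*} [AddCommGroup α] [LinearOrder α]
    [IsOrderedAddMonoid α] {a r x : α} :
    x ∈ Set.Ioo (a - r) a ∪ Set.Ioo a (a + r) ↔ |x - a| ∈ Set.Ioo 0 r := by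
  simp only [Set.mem_union, Set.mem_Ioo, abs_pos, sub_ne_zero, abs_sub_lt_iff, sub_lt_iff_lt_add,
    sub_lt_comm (a := a)]
  grind

theorem mem_Gset_iff {x : ℝ} :
    x ∈ Gset ↔ |x - π / 2| ∈ Set.Ioo 0 (π / 4) ∨ |x - 3 * π / 2| ∈ Set.Ioo 0 (π / 4) := by
  have hGset : Gset = (Set.Ioo (π / 2 - π / 4) (π / 2) ∪ Set.Ioo (π / 2) (π / 2 + π / 4)) ∪
      (Set.Ioo (3 * π / 2 - π / 4) (3 * π / 2) ∪ Set.Ioo (3 * π / 2) (3 * π / 2 + π / 4)) := by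
    rw [Gset, Set.union_assoc (_ ∪ _)]
    ring_nf
  rw [hGset, Set.mem_union, mem_Ioo_sub_union_Ioo_add_iff, mem_Ioo_sub_union_Ioo_add_iff]

theorem pi_div_two_mul_add_one_mem_Ioo {x : ℝ} (hx : 1 < x) :
    π / (2 * (x + 1)) ∈ Set.Ioo 0 (π / 4) :=
  ⟨by positivity, div_lt_div_of_pos_left pi_pos (by norm_num) (by linarith)⟩

section thetaStar

variable {N : ℕ}

theorem thetaStar_of_mod_eight_eq_two (h : N % 8 = 2) :
    thetaStar N = π / 2 + π / (2 * (N + 1)) := by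
  simp only [thetaStar, tval, h, if_true]
  field_simp
  ring

theorem thetaStar_of_mod_eight_eq_four (h : N % 8 = 4) :
    thetaStar N = π / 2 - π / (2 * (N + 1)) := by
  simp only [thetaStar, tval, h, Nat.reduceEqDiff, if_true, if_false]
  field_simp
  ring

theorem thetaStar_of_mod_eight_eq_six (h : N % 8 = 6) :
    thetaStar N = 3 * π / 2 - π / (2 * (N + 1)) := by
  simp only [thetaStar, tval, h, Nat.reduceEqDiff, if_true, if_false]
  field_simp
  ring

theorem thetaStar_of_mod_eight_eq_zero (h : N % 8 = 0) :
    thetaStar N = 3 * π / 2 + π / (2 * (N + 1)) := by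
  simp only [thetaStar, tval, h, OfNat.zero_ne_ofNat, if_false]
  field_simp
  ring

theorem abs_thetaStar_sub_pi_div_two (h : N % 8 = 2 ∨ N % 8 = 4) :
    |thetaStar N - π / 2| = π / (2 * (N + 1)) := by
  have hδ : 0 ≤ π / (2 * ((N : ℝ) + 1)) := by positivity
  rcases h with h | h
  · rw [thetaStar_of_mod_eight_eq_two h, add_sub_cancel_left, abs_of_nonneg hδ]
  · rw [thetaStar_of_mod_eight_eq_four h, sub_sub_cancel_left, abs_neg, abs_of_nonneg hδ]

theorem abs_thetaStar_sub_three_mul_pi_div_two (h : N % 8 = 6 ∨ N % 8 = 0) :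
    |thetaStar N - 3 * π / 2| = π / (2 * (N + 1)) := by
  have hδ : 0 ≤ π / (2 * ((N : ℝ) + 1)) := by positivity
  rcases h with h | h
  · rw [thetaStar_of_mod_eight_eq_six h, sub_sub_cancel_left, abs_neg, abs_of_nonneg hδ]
  · rw [thetaStar_of_mod_eight_eq_zero h, add_sub_cancel_left, abs_of_nonneg hδ]

end thetaStar

/-- Proposition 3: for every even `N ≥ 2`, the angle `θ*_N` lies in `𝒢`. -/
theorem thetaStar_mem_Gset (N : ℕ) (hN : 2 ≤ N) (hNeven : N % 2 = 0) :
    thetaStar N ∈ Gset := by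
  have hδ : π / (2 * ((N : ℝ) + 1)) ∈ Set.Ioo 0 (π / 4) :=
    pi_div_two_mul_add_one_mem_Ioo (Nat.one_lt_cast.mpr hN)
  have hmod : (N % 8 = 2 ∨ N % 8 = 4) ∨ (N % 8 = 6 ∨ N % 8 = 0) := by lia
  rw [mem_Gset_iff]
  rcases hmod with h | h
  · exact Or.inl (abs_thetaStar_sub_pi_div_two h ▸ hδ)
  · exact Or.inr (abs_thetaStar_sub_three_mul_pi_div_two h ▸ hδ)
end

section
/- Let N ≥ 3 be an odd natural number and let s be a real number with 1 < s < 2^{(N−1)/2}. If N ≡ 3 (mod 4), then there exists θ ∈ 𝒢 such that M_N(θ) = s. If N ≡ 1 (mod 4), then there exists θ ∈ 𝒢 such that M̃_N(θ) = s. (For odd N, every MABK value strictly between the local bound 1 and the maximum quantum value 2^{(N−1)/2} is achieved by a self-testable strategy from the one-parameter GHZ family, using the relabelled MABK expression when N ≡ 1 mod 4.) -/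
open Real

/-- The MABK value `M_N(θ)` of the one-parameter symmetric GHZ strategy. -/
noncomputable def MABK (N : ℕ) (θ : ℝ) : ℝ :=
  (2 : ℝ) ^ (((N : ℝ) - 1) / 2) *
    (cos (θ / 2 + π / 4) ^ N * sin ((N : ℝ) * θ / 2 + π / 4)
      + cos (θ / 2 - π / 4) ^ N * sin ((N : ℝ) * θ / 2 - π / 4))

/-- The relabelled MABK value `M̃_N(θ)` of the same strategy family, after relabelling
of every party's inputs followed by the output of every party's first measurement. -/
noncomputable def MABKtilde (N : ℕ) (θ : ℝ) : ℝ :=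
  (2 : ℝ) ^ (((N : ℝ) - 1) / 2) *
    (cos (θ / 2 + π / 4) ^ N * sin (-((N : ℝ) * θ / 2) + π / 4)
      - cos (θ / 2 - π / 4) ^ N * sin ((N : ℝ) * θ / 2 + π / 4))

/-!
Put `g x = cos x ^ N * cos (N * x)`, which has period `π`. Up to sign, both Bell expressions equal
`P θ = 2 ^ ((N - 1) / 2) * (g (θ / 2 - π / 4) - g (θ / 2 + π / 4))`, so the intermediate value
theorem on `[π / 2, 3π / 4]` applies: `P (π / 2)` is the quantum maximum, and `P` is at most `1` at
`π / 2 + π / N` if `N ≥ 4`, because the first wave vanishes there and the second is small. For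
`N = 3` this point lies beyond `3π / 4`, but `P θ = 2 * sin θ ^ 3` is below `1` at `3π / 4`.
The sign is absorbed by the translation `θ ↦ θ + π`, which negates `P` because
it exchanges the two waves.
-/

/-- The wave `cos x ^ N * cos (N * x)`, the real part of `((1 + exp (2 * I * x)) / 2) ^ N`; it is
the building block of both Bell expressions. -/
noncomputable def cosPowWave (N : ℕ) (x : ℝ) : ℝ :=
  cos x ^ N * cos (N * x)

/-- The common profile of `MABK` and `MABKtilde`: each of them equals it up to a sign depending
on `N`, in the residue class of `N` modulo `4` where it is used. -/
noncomputable def mabkProfile (N : ℕ) (θ : ℝ) : ℝ :=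
  (2 : ℝ) ^ (((N : ℝ) - 1) / 2) *
    (cosPowWave N (θ / 2 - π / 4) - cosPowWave N (θ / 2 + π / 4))

section CosPowWave

variable (N : ℕ)

lemma continuous_cosPowWave : Continuous (cosPowWave N) := by
  unfold cosPowWave
  fun_prop

lemma cosPowWave_zero : cosPowWave N 0 = 1 := by
  simp [cosPowWave]

lemma cosPowWave_periodic : Function.Periodic (cosPowWave N) π := by
  intro x
  rw [cosPowWave, cosPowWave, cos_add_pi, mul_add, cos_add_nat_mul_pi, neg_pow]
  have hsign : (-1 : ℝ) ^ N * (-1) ^ N = 1 := pow_mul_pow_eq_one N (by norm_num)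
  linear_combination cos x ^ N * cos (N * x) * hsign

lemma abs_cosPowWave_le (x : ℝ) : |cosPowWave N x| ≤ |cos x| ^ N := by
  rw [cosPowWave, abs_mul, abs_pow]
  exact mul_le_of_le_one_right (by positivity) (abs_cos_le_one _)

variable {N}

lemma cosPowWave_pi_div_two (hN : N ≠ 0) : cosPowWave N (π / 2) = 0 := by
  simp [cosPowWave, hN]

lemma cosPowWave_pi_div_two_mul (hN : N ≠ 0) : cosPowWave N (π / (2 * N)) = 0 := by
  have hangle : (N : ℝ) * (π / (2 * N)) = π / 2 := by field_simp
  rw [cosPowWave, hangle, cos_pi_div_two, mul_zero]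

end CosPowWave

section MabkProfile

variable (N : ℕ)

lemma continuous_mabkProfile : Continuous (mabkProfile N) := by
  have := continuous_cosPowWave N
  unfold mabkProfile
  fun_prop

lemma mabkProfile_antiperiodic : Function.Antiperiodic (mabkProfile N) π := by
  intro θ
  have hminus : (θ + π) / 2 - π / 4 = θ / 2 + π / 4 := by ring
  have hplus : (θ + π) / 2 + π / 4 = θ / 2 - π / 4 + π := by ring
  rw [mabkProfile, mabkProfile, hminus, hplus, cosPowWave_periodic]
  ring

end MabkProfile

lemma MABK_four_mul_add_three (k : ℕ) (θ : ℝ) :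
    MABK (4 * k + 3) θ = (-1) ^ k * mabkProfile (4 * k + 3) θ := by
  set N := 4 * k + 3 with hN
  have hplus : sin (N * θ / 2 + π / 4) = -((-1) ^ k * cos (N * (θ / 2 + π / 4))) := by
    rw [← cos_sub_nat_mul_pi, ← cos_sub_pi, ← cos_sub_pi_div_two, hN]
    congr 1; push_cast; ring
  have hminus : sin (N * θ / 2 - π / 4) = (-1) ^ k * cos (N * (θ / 2 - π / 4)) := by
    rw [← cos_add_nat_mul_pi, ← cos_sub_pi_div_two, hN]
    congr 1; push_cast; ring
  rw [MABK, mabkProfile, cosPowWave, cosPowWave, hplus, hminus]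
  ring

lemma MABKtilde_four_mul_add_one (k : ℕ) (θ : ℝ) :
    MABKtilde (4 * k + 1) θ = (-1) ^ (k + 1) * mabkProfile (4 * k + 1) θ := by
  set N := 4 * k + 1 with hN
  have hplus : sin (-(N * θ / 2) + π / 4) = (-1) ^ k * cos (N * (θ / 2 + π / 4)) := by
    rw [← cos_sub_nat_mul_pi, ← cos_pi_div_two_sub, hN]
    congr 1; push_cast; ring
  have hminus : sin (N * θ / 2 + π / 4) = (-1) ^ k * cos (N * (θ / 2 - π / 4)) := by
    rw [← cos_add_nat_mul_pi, ← cos_sub_pi_div_two, hN]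
    congr 1; push_cast; ring
  rw [MABKtilde, mabkProfile, cosPowWave, cosPowWave, hplus, hminus]
  ring

section Range

variable {N : ℕ}

lemma mabkProfile_pi_div_two (hN : N ≠ 0) :
    mabkProfile N (π / 2) = (2 : ℝ) ^ (((N : ℝ) - 1) / 2) := by
  have hminus : π / 2 / 2 - π / 4 = 0 := by ring
  have hplus : π / 2 / 2 + π / 4 = π / 2 := by ring
  rw [mabkProfile, hminus, hplus, cosPowWave_zero, cosPowWave_pi_div_two hN, sub_zero, mul_one]

lemma cos_pow_three_mul_add_sin_pow_three_mul (x : ℝ) :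
    cos x ^ 3 * cos (3 * x) + sin x ^ 3 * sin (3 * x) = cos (2 * x) ^ 3 := by
  rw [cos_three_mul, sin_three_mul, cos_two_mul']
  linear_combination
    3 * (cos x ^ 2 - sin x ^ 2) * (sin x ^ 2 + cos x ^ 2) * sin_sq_add_cos_sq x

lemma mabkProfile_three (θ : ℝ) : mabkProfile 3 θ = 2 * sin θ ^ 3 := by
  set x := θ / 2 - π / 4
  have hθ : sin θ = cos (2 * x) := by
    rw [← cos_sub_pi_div_two]; congr 1; ring
  have hcos : cos (θ / 2 + π / 4) = -sin x := by
    rw [← cos_add_pi_div_two]; congr 1; ring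
  have hcos_three : cos (3 * (θ / 2 + π / 4)) = sin (3 * x) := by
    rw [← cos_sub_pi_div_two, ← cos_sub_two_pi]; congr 1; ring
  have hscale : (2 : ℝ) ^ (((3 : ℕ) - 1 : ℝ) / 2) = 2 := by norm_num
  rw [mabkProfile, cosPowWave, cosPowWave, hscale, Nat.cast_ofNat, hcos, hcos_three, hθ,
    ← cos_pow_three_mul_add_sin_pow_three_mul]
  ring

lemma mabkProfile_three_pi_div_four_le_one : mabkProfile 3 (3 * π / 4) ≤ 1 := by
  have hsin : sin (3 * π / 4) = √2 / 2 := by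
    rw [← sin_pi_div_four, ← sin_pi_sub]; congr 1; ring
  have hsq : √2 ^ 2 = 2 := sq_sqrt zero_le_two
  rw [mabkProfile_three, hsin]
  nlinarith [sqrt_nonneg 2]

lemma two_rpow_mul_pow_le_one {c : ℝ} (hc : 0 ≤ c) (hc' : c ≤ √2 / 2) :
    (2 : ℝ) ^ (((N : ℝ) - 1) / 2) * c ^ N ≤ 1 := by
  have hscale : (2 : ℝ) ^ (((N : ℝ) - 1) / 2) = √2 ^ N / √2 := by
    rw [sqrt_eq_rpow, ← rpow_mul_natCast zero_le_two, ← rpow_sub two_pos]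
    congr 1; ring
  have hone : √2 * c ≤ 1 := by
    calc √2 * c ≤ √2 * (√2 / 2) := by gcongr
      _ = 1 := by rw [← mul_div_assoc, mul_self_sqrt zero_le_two, div_self two_ne_zero]
  calc (2 : ℝ) ^ (((N : ℝ) - 1) / 2) * c ^ N = (√2 * c) ^ N / √2 := by rw [hscale]; ring
    _ ≤ 1 / √2 := by gcongr; exact pow_le_one₀ (by positivity) hone
    _ ≤ 1 := div_le_one_of_le₀ (one_le_sqrt.2 one_le_two) (sqrt_nonneg 2)

lemma mabkProfile_pi_div_two_add_pi_div_le_one (hN : 2 ≤ N) :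
    mabkProfile N (π / 2 + π / N) ≤ 1 := by
  set y := π / (2 * N) with hy
  have hN' : (2 : ℝ) ≤ N := by exact_mod_cast hN
  have hminus : (π / 2 + π / N) / 2 - π / 4 = y := by rw [hy]; ring
  have hplus : (π / 2 + π / N) / 2 + π / 4 = y + π / 2 := by rw [hy]; ring
  have hy_nonneg : 0 ≤ y := by positivity
  have hy_le : y ≤ π / 4 := by
    rw [hy]; gcongr; linarith
  have hsin_nonneg : 0 ≤ sin y :=
    sin_nonneg_of_nonneg_of_le_pi hy_nonneg (by linarith [pi_pos])
  have hsin_le : sin y ≤ √2 / 2 := by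
    rw [← sin_pi_div_four]
    exact sin_le_sin_of_le_of_le_pi_div_two (by linarith [pi_pos]) (by linarith [pi_pos]) hy_le
  have hwave : |cosPowWave N (y + π / 2)| ≤ sin y ^ N := by
    simpa only [cos_add_pi_div_two, abs_neg, abs_of_nonneg hsin_nonneg]
      using abs_cosPowWave_le N (y + π / 2)
  calc mabkProfile N (π / 2 + π / N)
      = (2 : ℝ) ^ (((N : ℝ) - 1) / 2) * -cosPowWave N (y + π / 2) := by
        rw [mabkProfile, hminus, hplus, cosPowWave_pi_div_two_mul (by omega), zero_sub]
    _ ≤ (2 : ℝ) ^ (((N : ℝ) - 1) / 2) * sin y ^ N := by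
        gcongr; exact (neg_le_abs _).trans hwave
    _ ≤ 1 := two_rpow_mul_pow_le_one hsin_nonneg hsin_le

lemma exists_mabkProfile_le_one (hN : 3 ≤ N) :
    ∃ θ ∈ Set.Ioc (π / 2) (3 * π / 4), mabkProfile N θ ≤ 1 := by
  obtain rfl | hN4 : N = 3 ∨ 4 ≤ N := by omega
  · exact ⟨3 * π / 4, ⟨by linarith [pi_pos], le_rfl⟩, mabkProfile_three_pi_div_four_le_one⟩
  · have hN4' : (4 : ℝ) ≤ N := by exact_mod_cast hN4
    have hpos : 0 < π / N := by positivity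
    have hle : π / N ≤ π / 4 := by gcongr
    exact ⟨π / 2 + π / N, ⟨by linarith, by linarith⟩,
      mabkProfile_pi_div_two_add_pi_div_le_one (by omega)⟩

variable {s : ℝ}

lemma exists_mabkProfile_eq (hN : 3 ≤ N) (hs1 : 1 < s)
    (hs2 : s < (2 : ℝ) ^ (((N : ℝ) - 1) / 2)) :
    ∃ θ ∈ Set.Ioo (π / 2) (3 * π / 4), mabkProfile N θ = s := by
  obtain ⟨t, ⟨ht, ht'⟩, hle⟩ := exists_mabkProfile_le_one hN
  have hs : s ∈ Set.Ioo (mabkProfile N t) (mabkProfile N (π / 2)) :=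
    ⟨hle.trans_lt hs1, by rwa [mabkProfile_pi_div_two (by omega)]⟩
  obtain ⟨θ, hθ, rfl⟩ :=
    intermediate_value_Ioo' ht.le (continuous_mabkProfile N).continuousOn hs
  exact ⟨θ, ⟨hθ.1, hθ.2.trans_le ht'⟩, rfl⟩

lemma mem_Gset_of_mem_Ioo {θ : ℝ} (hθ : θ ∈ Set.Ioo (π / 2) (3 * π / 4)) : θ ∈ Gset :=
  Or.inl (Or.inl (Or.inr hθ))

lemma add_pi_mem_Gset_of_mem_Ioo {θ : ℝ} (hθ : θ ∈ Set.Ioo (π / 2) (3 * π / 4)) :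
    θ + π ∈ Gset :=
  Or.inr ⟨by linarith [hθ.1], by linarith [hθ.2]⟩

lemma exists_mem_Gset_neg_one_pow_mul_mabkProfile_eq (k : ℕ) (hN : 3 ≤ N) (hs1 : 1 < s)
    (hs2 : s < (2 : ℝ) ^ (((N : ℝ) - 1) / 2)) :
    ∃ θ ∈ Gset, (-1) ^ k * mabkProfile N θ = s := by
  obtain ⟨θ, hθ, rfl⟩ := exists_mabkProfile_eq hN hs1 hs2
  rcases neg_one_pow_eq_or ℝ k with hk | hk
  · exact ⟨θ, mem_Gset_of_mem_Ioo hθ, by rw [hk, one_mul]⟩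
  · exact ⟨θ + π, add_pi_mem_Gset_of_mem_Ioo hθ, by
      rw [hk, mabkProfile_antiperiodic, neg_one_mul, neg_neg]⟩

end Range

/-- Proposition 5: for odd `N ≥ 3`, every MABK value strictly between the local bound `1`
and the maximum quantum value `2^{(N−1)/2}` is achieved at some `θ ∈ 𝒢`, using `M_N` when
`N ≡ 3 (mod 4)` and the relabelled expression `M̃_N` when `N ≡ 1 (mod 4)`. -/
theorem mabk_range_odd (N : ℕ) (hN : 3 ≤ N) (hNodd : N % 2 = 1)
    (s : ℝ) (hs1 : 1 < s) (hs2 : s < (2 : ℝ) ^ (((N : ℝ) - 1) / 2)) :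
    (N % 4 = 3 → ∃ θ ∈ Gset, MABK N θ = s)
    ∧ (N % 4 = 1 → ∃ θ ∈ Gset, MABKtilde N θ = s) := by
  constructor
  · intro hmod
    obtain ⟨k, rfl⟩ : ∃ k, N = 4 * k + 3 := ⟨N / 4, by omega⟩
    simpa only [MABK_four_mul_add_three]
      using exists_mem_Gset_neg_one_pow_mul_mabkProfile_eq k hN hs1 hs2
  · intro hmod
    obtain ⟨k, rfl⟩ : ∃ k, N = 4 * k + 1 := ⟨N / 4, by omega⟩
    simpa only [MABKtilde_four_mul_add_one]
      using exists_mem_Gset_neg_one_pow_mul_mabkProfile_eq (k + 1) hN hs1 hs2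
end
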